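/- arXiv:2602.06168 — 8 statements merged into one kernel-verified Lean document; each statement's English description precedes it below -/
import Mathlib

section
/- For every μ > 0, every positive integer n, and every x ∈ [0,1], one has a_n(x) ≥ a_{n+1}(x), where a_n(x) := ln(1 + x/(n(1+μ))) / ln(1 + 1/(n(1+μ))); that is, for each fixed x the sequence (a_n(x))_n is nonincreasing in n. -/
open Real Filter Set

/-- `logμ μ x = ln(1+μ+x)`. -/
noncomputable def logμ (μ x : ℝ) : ℝ := Real.log (1 + μ + x)

/-- `a μ n x = ln(1 + x/(n(1+μ))) / ln(1 + 1/(n(1+μ)))`. -/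
noncomputable def aFun (μ : ℝ) (n : ℕ) (x : ℝ) : ℝ :=
  Real.log (1 + x / (n * (1 + μ))) / Real.log (1 + 1 / (n * (1 + μ)))

/-- Bernstein basis polynomial `p_{n,k}(y) = C(n,k) y^k (1-y)^(n-k)`. -/
noncomputable def pB (n k : ℕ) (y : ℝ) : ℝ :=
  (n.choose k : ℝ) * y ^ k * (1 - y) ^ (n - k)

/-- Classical Bernstein operator. -/
noncomputable def Bop (n : ℕ) (g : ℝ → ℝ) (y : ℝ) : ℝ :=
  ∑ k ∈ Finset.range (n + 1), g ((k : ℝ) / (n : ℝ)) * pB n k y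

/-- Bernstein-type logarithmic operator `L_n`. -/
noncomputable def Lop (μ : ℝ) (n : ℕ) (f : ℝ → ℝ) (x : ℝ) : ℝ :=
  logμ μ x * ∑ k ∈ Finset.range (n + 1),
    f ((k : ℝ) / (n : ℝ)) * (1 / logμ μ ((k : ℝ) / (n : ℝ))) * pB n k (aFun μ n x)

theorem aux_log (s t x : ℝ) (ht : 0 < t) (hts : t ≤ s) (hx0 : 0 ≤ x) (hx1 : x ≤ 1) :
    Real.log (1 + t * x) / Real.log (1 + t) ≤ Real.log (1 + s * x) / Real.log (1 + s) := by
  have hlt : 0 < Real.log (1 + t) := Real.log_pos (by linarith)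
  have hls : 0 < Real.log (1 + s) := Real.log_pos (by linarith)
  have htx : 0 ≤ t * x := mul_nonneg ht.le hx0
  have hp : 1 ≤ Real.log (1 + s) / Real.log (1 + t) := by
    rw [le_div_iff₀ hlt, one_mul]
    exact Real.log_le_log (by linarith) (by linarith)
  have hc := (convexOn_rpow hp).2 (x := 1) (y := 1 + t) (by simp) (by simp; linarith)
    (sub_nonneg.2 hx1) hx0 (by ring)
  have e : (1 + t) ^ (Real.log (1 + s) / Real.log (1 + t)) = 1 + s := by
    rw [Real.rpow_def_of_pos (by linarith), mul_div_cancel₀ _ hlt.ne', Real.exp_log (by linarith)]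
  simp only [smul_eq_mul, Real.one_rpow, e] at hc
  have e1 : (1 - x) * 1 + x * (1 + t) = 1 + t * x := by ring
  have e2 : (1 - x) * 1 + x * (1 + s) = 1 + s * x := by ring
  rw [e1, e2] at hc
  have h := Real.log_le_log (Real.rpow_pos_of_pos (by linarith) _) hc
  rw [Real.log_rpow (by linarith)] at h
  rw [div_le_div_iff₀ hlt hls]
  rw [div_mul_eq_mul_div, div_le_iff₀ hlt] at h
  linarith

theorem stmt2 (μ : ℝ) (hμ : 0 < μ) (n : ℕ) (hn : 0 < n) (x : ℝ)
    (hx : x ∈ Set.Icc (0:ℝ) 1) :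
    aFun μ (n + 1) x ≤ aFun μ n x := by
  have hn' : (0:ℝ) < n := by exact_mod_cast hn
  have h := aux_log (1 / (n * (1 + μ))) (1 / ((n + 1 : ℕ) * (1 + μ))) x (by positivity)
    (by push_cast; gcongr; linarith) hx.1 hx.2
  simpa only [aFun, one_div_mul_eq_div] using h
end

section
/- Let μ > 0 and let f : [0,1] → ℝ be bounded. Then for every x ∈ [0,1] at which f is continuous, lim_{n→∞} L_n(f, x) = f(x). -/
open Real Filter Set

lemma pB_eq (n k : ℕ) (y : ℝ) : pB n k y = (bernsteinPolynomial ℝ n k).eval y := by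
  simp [pB, bernsteinPolynomial]

lemma pB_sum (n : ℕ) (y : ℝ) : ∑ k ∈ Finset.range (n + 1), pB n k y = 1 := by
  have h := congrArg (Polynomial.eval y) (bernsteinPolynomial.sum ℝ n)
  simpa [Polynomial.eval_finset_sum, pB_eq] using h

lemma pB_var (n : ℕ) (hn : 0 < n) (y : ℝ) :
    ∑ k ∈ Finset.range (n + 1), ((k : ℝ) / n - y) ^ 2 * pB n k y = y * (1 - y) / n := by
  have h := congrArg (Polynomial.eval y) (bernsteinPolynomial.variance ℝ n)
  simp only [Polynomial.eval_finset_sum, Polynomial.eval_mul, Polynomial.eval_pow,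
    Polynomial.eval_sub, nsmul_eq_mul, Polynomial.eval_natCast, Polynomial.eval_X,
    Polynomial.eval_one, ← pB_eq] at h
  have hn' : (n : ℝ) ≠ 0 := by positivity
  have : y * (1 - y) / n = (n * y * (1 - y)) / (n : ℝ) ^ 2 := by field_simp
  rw [this, ← h, Finset.sum_div]
  refine Finset.sum_congr rfl fun k _ => ?_
  field_simp
  ring

lemma pB_nonneg (n k : ℕ) (y : ℝ) (hy : y ∈ Set.Icc (0:ℝ) 1) : 0 ≤ pB n k y := by
  have h0 := hy.1
  have h1 : 0 ≤ 1 - y := by linarith [hy.2]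
  unfold pB
  positivity

lemma aFun_mem (μ : ℝ) (hμ : 0 < μ) (n : ℕ) (hn : 0 < n) (x : ℝ) (hx : x ∈ Set.Icc (0:ℝ) 1) :
    aFun μ n x ∈ Set.Icc (0:ℝ) 1 := by
  have hc : (0:ℝ) < n * (1 + μ) := by positivity
  have hx0 : 0 ≤ x / (n * (1 + μ)) := div_nonneg hx.1 hc.le
  have hle : x / (n * (1 + μ)) ≤ 1 / (n * (1 + μ)) := by
    gcongr
    exact hx.2
  have hpos : 0 < Real.log (1 + 1 / (n * (1 + μ))) := by
    apply Real.log_pos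
    have : 0 < 1 / ((n:ℝ) * (1 + μ)) := by positivity
    linarith
  have hnum : 0 ≤ Real.log (1 + x / (n * (1 + μ))) := Real.log_nonneg (by linarith)
  refine ⟨div_nonneg hnum hpos.le, ?_⟩
  unfold aFun
  rw [div_le_one hpos]
  exact Real.log_le_log (by linarith) (by linarith)

lemma aFun_tendsto (μ : ℝ) (hμ : 0 < μ) (x : ℝ) :
    Tendsto (fun n : ℕ => aFun μ n x) atTop (nhds x) := by
  have hc : Tendsto (fun n : ℕ => (n : ℝ) * (1 + μ)) atTop atTop :=
    tendsto_natCast_atTop_atTop.atTop_mul_const (by linarith)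
  have h1 := (Real.tendsto_mul_log_one_add_div_atTop x).comp hc
  have h2 := (Real.tendsto_mul_log_one_add_div_atTop 1).comp hc
  have h3 := h1.div h2 one_ne_zero
  rw [div_one] at h3
  refine h3.congr' ?_
  filter_upwards [eventually_gt_atTop 0] with n hn
  have hn' : ((n:ℝ) * (1 + μ)) ≠ 0 := by positivity
  simp only [Function.comp, aFun, Pi.div_apply]
  rw [mul_div_mul_left _ _ hn']

lemma Bop_tendsto (g : ℝ → ℝ) (K : ℝ) (hK : ∀ t ∈ Set.Icc (0:ℝ) 1, |g t| ≤ K)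
    (x : ℝ) (hx : x ∈ Set.Icc (0:ℝ) 1) (hg : ContinuousWithinAt g (Set.Icc (0:ℝ) 1) x)
    (y : ℕ → ℝ) (hy : ∀ n, 0 < n → y n ∈ Set.Icc (0:ℝ) 1) (hyx : Tendsto y atTop (nhds x)) :
    Tendsto (fun n : ℕ => Bop n g (y n)) atTop (nhds (g x)) := by
  have hK0 : 0 ≤ K := (abs_nonneg _).trans (hK x hx)
  rw [Metric.tendsto_atTop']
  intro ε hε
  obtain ⟨δ, hδ, hgδ⟩ := Metric.continuousWithinAt_iff.1 hg (ε / 2) (by positivity)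
  have hpt : ∀ t ∈ Set.Icc (0:ℝ) 1, |g t - g x| ≤ ε / 2 + 2 * K / δ ^ 2 * (t - x) ^ 2 := by
    intro t ht
    rcases lt_or_ge (dist t x) δ with h | h
    · have := hgδ ht h
      rw [Real.dist_eq] at this
      have : 0 ≤ 2 * K / δ ^ 2 * (t - x) ^ 2 := by positivity
      linarith
    · rw [Real.dist_eq] at h
      have h1 : |g t - g x| ≤ 2 * K := by
        have := abs_sub (g t) (g x)
        linarith [hK t ht, hK x hx]
      have h2 : δ ^ 2 ≤ (t - x) ^ 2 := by
        rw [← sq_abs (t - x)]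
        gcongr
      have h3 : 2 * K = 2 * K / δ ^ 2 * δ ^ 2 := by field_simp
      have h4 : 2 * K / δ ^ 2 * δ ^ 2 ≤ 2 * K / δ ^ 2 * (t - x) ^ 2 := by gcongr
      linarith
  have hlim : Tendsto (fun n : ℕ => ε / 2 + 2 * K / δ ^ 2 *
      (2 * (y n * (1 - y n) / n) + 2 * (y n - x) ^ 2)) atTop (nhds (ε / 2)) := by
    have ha : Tendsto (fun n : ℕ => y n * (1 - y n) / n) atTop (nhds 0) :=
      (hyx.mul (tendsto_const_nhds.sub hyx)).div_atTop tendsto_natCast_atTop_atTop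
    have hb : Tendsto (fun n : ℕ => (y n - x) ^ 2) atTop (nhds ((x - x) ^ 2)) :=
      (hyx.sub tendsto_const_nhds).pow 2
    have := (((ha.const_mul 2).add (hb.const_mul 2)).const_mul (2 * K / δ ^ 2)).const_add (ε / 2)
    simpa using this
  have hev := (hlim.eventually_lt_const (by linarith : ε / 2 < ε)).and (eventually_gt_atTop 0)
  obtain ⟨N, hN⟩ := eventually_atTop.1 hev
  refine ⟨N, fun n hn => ?_⟩
  obtain ⟨h1, hn0⟩ := hN n hn.le
  refine lt_of_le_of_lt ?_ h1
  have hn' : (0:ℝ) < n := by exact_mod_cast hn0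
  have hdiff : Bop n g (y n) - g x =
      ∑ k ∈ Finset.range (n + 1), (g ((k : ℝ) / n) - g x) * pB n k (y n) := by
    simp only [sub_mul, Finset.sum_sub_distrib, ← Finset.mul_sum, pB_sum, Bop, mul_one]
  rw [Real.dist_eq, hdiff]
  calc |∑ k ∈ Finset.range (n + 1), (g ((k : ℝ) / n) - g x) * pB n k (y n)|
      ≤ ∑ k ∈ Finset.range (n + 1), |(g ((k : ℝ) / n) - g x) * pB n k (y n)| :=
        Finset.abs_sum_le_sum_abs _ _
    _ ≤ ∑ k ∈ Finset.range (n + 1), (ε / 2 + 2 * K / δ ^ 2 *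
          (2 * ((k : ℝ) / n - y n) ^ 2 + 2 * (y n - x) ^ 2)) * pB n k (y n) := by
        refine Finset.sum_le_sum fun k hk => ?_
        have hp := pB_nonneg n k (y n) (hy n hn0)
        rw [abs_mul, abs_of_nonneg hp]
        refine mul_le_mul_of_nonneg_right ?_ hp
        have hkn : (k : ℝ) ≤ n := by exact_mod_cast Nat.lt_succ_iff.1 (Finset.mem_range.1 hk)
        refine (hpt ((k : ℝ) / n) ⟨by positivity, (div_le_one hn').2 hkn⟩).trans ?_
        gcongr
        nlinarith [sq_nonneg (((k : ℝ) / n - y n) - (y n - x))]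
    _ = ∑ k ∈ Finset.range (n + 1), ((ε / 2 + 2 * K / δ ^ 2 * (2 * (y n - x) ^ 2)) * pB n k (y n)
          + (2 * K / δ ^ 2 * 2) * (((k : ℝ) / n - y n) ^ 2 * pB n k (y n))) := by
        refine Finset.sum_congr rfl fun k _ => ?_
        ring
    _ = _ := by
        rw [Finset.sum_add_distrib, ← Finset.mul_sum, ← Finset.mul_sum, pB_sum, pB_var n hn0]
        ring

theorem stmt5 (μ : ℝ) (hμ : 0 < μ) (f : ℝ → ℝ)
    (hbd : ∃ M : ℝ, ∀ x ∈ Set.Icc (0:ℝ) 1, |f x| ≤ M)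
    (x : ℝ) (hx : x ∈ Set.Icc (0:ℝ) 1)
    (hcont : ContinuousWithinAt f (Set.Icc (0:ℝ) 1) x) :
    Tendsto (fun n : ℕ => Lop μ n f x) atTop (nhds (f x)) := by
  obtain ⟨M, hM⟩ := hbd
  have hl0 : 0 < Real.log (1 + μ) := Real.log_pos (by linarith)
  have hl : ∀ t ∈ Set.Icc (0:ℝ) 1, Real.log (1 + μ) ≤ logμ μ t := fun t ht =>
    Real.log_le_log (by linarith) (by linarith [ht.1])
  have hlx : logμ μ x ≠ 0 := (hl0.trans_le (hl x hx)).ne'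
  have hc : ContinuousWithinAt (logμ μ) (Set.Icc (0:ℝ) 1) x := by
    unfold logμ
    refine ContinuousWithinAt.log (by fun_prop) ?_
    have := hx.1
    positivity
  have hB := Bop_tendsto (fun t => f t * (1 / logμ μ t)) (M * (1 / Real.log (1 + μ)))
    (fun t ht => by
      have h1 := hl t ht
      have hM0 : 0 ≤ M := (abs_nonneg _).trans (hM t ht)
      have h2 : 0 < logμ μ t := hl0.trans_le h1
      rw [abs_mul, abs_of_pos (by positivity : 0 < 1 / logμ μ t)]
      have := hM t ht
      gcongr) x hx
    (hcont.mul (continuousWithinAt_const.div hc hlx)) (fun n => aFun μ n x)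
    (fun n hn => aFun_mem μ hμ n hn x hx) (aFun_tendsto μ hμ x)
  have := hB.const_mul (logμ μ x)
  have he : logμ μ x * (f x * (1 / logμ μ x)) = f x := by field_simp
  simp only [he] at this
  exact this
end

section
/- Let μ > 0 and let f : [0,1] → ℝ be continuous. Then L_n(f, ·) converges to f uniformly on [0,1] as n → ∞; that is, sup_{x ∈ [0,1]} |L_n(f, x) − f(x)| → 0 as n → ∞. -/
open Real Filter Set

lemma aFun_bounds (μ : ℝ) (hμ : 0 < μ) (n : ℕ) (hn : 0 < n) (x : ℝ) (hx : x ∈ Set.Icc (0:ℝ) 1) :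
    aFun μ n x ∈ Set.Icc (0:ℝ) 1 ∧ |aFun μ n x - x| ≤ 1 / (n : ℝ) := by
  obtain ⟨h0, h1⟩ := hx
  have hn' : (0:ℝ) < n := by exact_mod_cast hn
  obtain ⟨c, hc⟩ : ∃ c : ℝ, c = 1 / (n * (1 + μ)) := ⟨_, rfl⟩
  have hcpos : 0 < c := by rw [hc]; positivity
  have hcn : c ≤ 1 / (n : ℝ) := by
    rw [hc]
    apply one_div_le_one_div_of_le hn'
    nlinarith
  have ha : aFun μ n x = Real.log (1 + c * x) / Real.log (1 + c) := by
    unfold aFun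
    rw [hc]
    congr 3
    ring
  have hcx : 0 ≤ c * x := by positivity
  have hcx1 : c * x ≤ c := by nlinarith
  have hL : 0 < Real.log (1 + c) := Real.log_pos (by linarith)
  have hU1 : Real.log (1 + c) ≤ c := by
    have := Real.log_le_sub_one_of_pos (show 0 < 1 + c by linarith); linarith
  have hU2 : Real.log (1 + c * x) ≤ c * x := by
    have := Real.log_le_sub_one_of_pos (show 0 < 1 + c * x by linarith); linarith
  have hD1 : c ≤ Real.log (1 + c) * (1 + c) := by
    have := Real.one_sub_inv_le_log_of_pos (show 0 < 1 + c by linarith)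
    have h2 := mul_le_mul_of_nonneg_right this (show 0 ≤ 1 + c by linarith)
    have h3 : (1 - (1 + c)⁻¹) * (1 + c) = c := by
      have : 1 + c ≠ 0 := by positivity
      field_simp; ring
    linarith
  have hN0 : 0 ≤ Real.log (1 + c * x) := Real.log_nonneg (by linarith)
  have hD2 : c * x ≤ Real.log (1 + c * x) * (1 + c) := by
    have := Real.one_sub_inv_le_log_of_pos (show 0 < 1 + c * x by linarith)
    have h2 := mul_le_mul_of_nonneg_right this (show 0 ≤ 1 + c * x by linarith)
    have h3 : (1 - (1 + c * x)⁻¹) * (1 + c * x) = c * x := by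
      have : 1 + c * x ≠ 0 := by positivity
      field_simp; ring
    nlinarith
  rw [ha]
  refine ⟨⟨by positivity, ?_⟩, ?_⟩
  · rw [div_le_one hL]
    exact Real.log_le_log (by linarith) (by linarith)
  · refine le_trans ?_ hcn
    rw [abs_le]
    constructor
    · have : x - c ≤ Real.log (1 + c * x) / Real.log (1 + c) := by
        rw [le_div_iff₀ hL]
        have h5 : x * Real.log (1 + c) ≤ Real.log (1 + c * x) * (1 + c) := by nlinarith
        have h6 : Real.log (1 + c * x) ≤ Real.log (1 + c) :=
          Real.log_le_log (by linarith) (by linarith)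
        nlinarith
      linarith
    · have : Real.log (1 + c * x) / Real.log (1 + c) ≤ x + c := by
        rw [div_le_iff₀ hL]
        have h5 : c * x ≤ x * (Real.log (1 + c) * (1 + c)) := by nlinarith
        have h6 : x * Real.log (1 + c) * c ≤ Real.log (1 + c) * c := by
          have := mul_le_mul_of_nonneg_right h1 (mul_pos hL hcpos).le
          linarith
        nlinarith
      linarith

theorem stmt6 (μ : ℝ) (hμ : 0 < μ) (f : ℝ → ℝ)
    (hf : ContinuousOn f (Set.Icc (0:ℝ) 1)) :
    TendstoUniformlyOn (fun (n : ℕ) (x : ℝ) => Lop μ n f x) f atTop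
      (Set.Icc (0:ℝ) 1) := by
  have hlogpos : ∀ x ∈ Set.Icc (0:ℝ) 1, 0 < logμ μ x := fun x hx =>
    Real.log_pos (by linarith [hx.1])
  have hg : ContinuousOn (fun x => f x * (1 / logμ μ x)) (Set.Icc (0:ℝ) 1) := by
    refine hf.mul (continuousOn_const.div ?_ fun x hx => (hlogpos x hx).ne')
    unfold logμ
    exact ContinuousOn.log (by fun_prop) fun x hx => by linarith [hx.1]
  obtain ⟨g, hgdef⟩ : ∃ g : ℝ → ℝ, g = fun x => f x * (1 / logμ μ x) := ⟨_, rfl⟩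
  rw [← hgdef] at hg
  let G : C(unitInterval, ℝ) := ⟨fun x => g x, hg.domRestrict⟩
  have hB := Metric.tendsto_atTop.1 (bernsteinApproximation_uniform G)
  have huc := Metric.uniformContinuousOn_iff.1
    (isCompact_Icc.uniformContinuousOn_of_continuous hg)
  obtain ⟨M, hM⟩ : ∃ M : ℝ, M = logμ μ 1 := ⟨_, rfl⟩
  have hMpos : 0 < M := hM ▸ hlogpos 1 (by simp)
  rw [Metric.tendstoUniformlyOn_iff]
  intro ε hε
  have hε' : 0 < ε / (2 * M) := by positivity
  obtain ⟨N, hN⟩ := hB _ hε'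
  obtain ⟨δ, hδ, huc⟩ := huc _ hε'
  obtain ⟨N2, hN2⟩ := exists_nat_one_div_lt hδ
  filter_upwards [eventually_ge_atTop N, eventually_ge_atTop (N2 + 1)] with n hn1 hn2 x hx
  have hnpos : 0 < n := by omega
  obtain ⟨ha, hax⟩ := aFun_bounds μ hμ n hnpos x hx
  have hsmall : 1 / (n : ℝ) < δ := by
    refine lt_of_le_of_lt ?_ hN2
    apply one_div_le_one_div_of_le (by positivity)
    exact_mod_cast hn2
  have h1 := huc _ ha x hx (by rw [Real.dist_eq]; linarith)
  have h2 := lt_of_le_of_lt (ContinuousMap.dist_apply_le_dist ⟨aFun μ n x, ha⟩) (hN n hn1)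
  have hLop : Lop μ n f x = logμ μ x * bernsteinApproximation n G ⟨aFun μ n x, ha⟩ := by
    unfold Lop
    rw [bernsteinApproximation.apply, Finset.sum_range]
    congr 1
    refine Finset.sum_congr rfl fun k _ => ?_
    rw [bernstein_apply, smul_eq_mul, mul_comm]
    simp [G, hgdef, pB, bernstein.z]
  have hfx : f x = logμ μ x * g x := by
    have := (hlogpos x hx).ne'
    rw [hgdef]; field_simp
  have hxM : logμ μ x ≤ M := by
    rw [hM]; unfold logμ
    exact Real.log_le_log (by linarith [hx.1]) (by linarith [hx.2])
  have hG : G ⟨aFun μ n x, ha⟩ = g (aFun μ n x) := rfl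
  rw [hG] at h2
  have h3 : dist (g x) (bernsteinApproximation n G ⟨aFun μ n x, ha⟩) < ε / M := by
    have := dist_triangle_right (g x) (bernsteinApproximation n G ⟨aFun μ n x, ha⟩)
      (g (aFun μ n x))
    rw [dist_comm (g x) (g (aFun μ n x))] at this
    have e : ε / M = ε / (2 * M) + ε / (2 * M) := by field_simp; ring
    linarith
  rw [hLop, hfx, Real.dist_eq, ← mul_sub, abs_mul, abs_of_pos (hlogpos x hx), ← Real.dist_eq]
  calc _ ≤ M * dist (g x) (bernsteinApproximation n G ⟨aFun μ n x, ha⟩) := by gcongr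
    _ < M * (ε / M) := by gcongr
    _ = ε := by field_simp
end

section
/- Let μ > 0 and let 0 < λ₁ < λ₂ be real numbers. For a fixed x₀ ∈ [0,1], define h : [0,1] → ℝ by h(x) := 1 + (λ₂/(λ₁−λ₂)) · (ln(1+μ+x))^{λ₁}/(ln(1+μ+x₀))^{λ₁} + (λ₁/(λ₂−λ₁)) · (ln(1+μ+x))^{λ₂}/(ln(1+μ+x₀))^{λ₂}. Then h(x₀) = 0 and h(x) > 0 for every x ∈ [0,1] with x ≠ x₀ (in particular, x₀ is the strict absolute minimum point of h on [0,1]). -/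
open Real Filter Set

/-- The auxiliary function `h` built from powers of `ln(1+μ+x)`. -/
noncomputable def hFun (μ l₁ l₂ x₀ x : ℝ) : ℝ :=
  1 + (l₂ / (l₁ - l₂)) * (Real.log (1 + μ + x)) ^ l₁ / (Real.log (1 + μ + x₀)) ^ l₁
    + (l₁ / (l₂ - l₁)) * (Real.log (1 + μ + x)) ^ l₂ / (Real.log (1 + μ + x₀)) ^ l₂

theorem stmt8 (μ : ℝ) (hμ : 0 < μ) (l₁ l₂ : ℝ) (hl₁ : 0 < l₁) (hl : l₁ < l₂)
    (x₀ : ℝ) (hx₀ : x₀ ∈ Set.Icc (0:ℝ) 1) :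
    hFun μ l₁ l₂ x₀ x₀ = 0 ∧
    ∀ x ∈ Set.Icc (0:ℝ) 1, x ≠ x₀ → 0 < hFun μ l₁ l₂ x₀ x := by
  have hd : 0 < l₂ - l₁ := sub_pos.mpr hl
  have hB : 0 < Real.log (1 + μ + x₀) := Real.log_pos (by linarith [hx₀.1])
  have key : ∀ x ∈ Set.Icc (0:ℝ) 1, hFun μ l₁ l₂ x₀ x =
      (l₂ - l₁ - l₂ * (Real.log (1 + μ + x) / Real.log (1 + μ + x₀)) ^ l₁
        + l₁ * (Real.log (1 + μ + x) / Real.log (1 + μ + x₀)) ^ l₂) / (l₂ - l₁) := by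
    intro x hx
    have hA : 0 < Real.log (1 + μ + x) := Real.log_pos (by linarith [hx.1])
    unfold hFun
    rw [Real.div_rpow hA.le hB.le, Real.div_rpow hA.le hB.le,
      show l₁ - l₂ = -(l₂ - l₁) by ring, div_neg]
    have h1 := (Real.rpow_pos_of_pos hB l₁).ne'
    have h2 := (Real.rpow_pos_of_pos hB l₂).ne'
    have h3 := hd.ne'
    field_simp
    ring
  constructor
  · rw [key x₀ hx₀, div_self hB.ne', Real.one_rpow, Real.one_rpow]
    ring
  · intro x hx hne
    rw [key x hx]
    have hA : 0 < Real.log (1 + μ + x) := Real.log_pos (by linarith [hx.1])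
    apply div_pos _ hd
    have ht : 0 < Real.log (1 + μ + x) / Real.log (1 + μ + x₀) := div_pos hA hB
    have ht1 : Real.log (1 + μ + x) / Real.log (1 + μ + x₀) ≠ 1 := by
      intro h
      rw [div_eq_one_iff_eq hB.ne'] at h
      have := Real.log_injOn_pos (show 1 + μ + x ∈ Set.Ioi (0:ℝ) from by
        have := hx.1
        simp only [Set.mem_Ioi]; linarith) (show 1 + μ + x₀ ∈ Set.Ioi (0:ℝ) from by
        have := hx₀.1
        simp only [Set.mem_Ioi]; linarith) h
      exact hne (by linarith)
    generalize Real.log (1 + μ + x) / Real.log (1 + μ + x₀) = t at ht ht1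
    have hu : 0 < t ^ l₁ := Real.rpow_pos_of_pos ht l₁
    have hu1 : t ^ l₁ - 1 ≠ 0 := by
      intro h
      have h' : t ^ l₁ = 1 := by linarith
      exact ht1 ((Real.rpow_left_inj ht.le zero_le_one hl₁.ne').mp (by rw [h', Real.one_rpow]))
    have hb := one_add_mul_self_lt_rpow_one_add (s := t ^ l₁ - 1) (by linarith) hu1
      (p := l₂ / l₁) ((one_lt_div hl₁).mpr hl)
    rw [add_sub_cancel, ← Real.rpow_mul ht.le, mul_div_cancel₀ _ hl₁.ne'] at hb
    have hm := mul_lt_mul_of_pos_left hb hl₁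
    have e : l₁ * (1 + l₂ / l₁ * (t ^ l₁ - 1)) = l₁ + l₂ * (t ^ l₁ - 1) := by
      field_simp
    rw [e] at hm
    linarith
end

section
/- Let μ > 0. For every x ∈ [0,1], lim_{n→∞} n · (a_n(x) − x) = (x − x²)/(2(1+μ)), where a_n(x) := ln(1 + x/(n(1+μ))) / ln(1 + 1/(n(1+μ))). -/
open Real Filter Set

lemma G_lim (y : ℝ) (hy : y ∈ Set.Icc (0:ℝ) 1) :
    Tendsto (fun h : ℝ => (Real.log (1 + y * h) - y * h) / h ^ 2) (nhdsWithin 0 (Set.Ioi 0))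
      (nhds (-y ^ 2 / 2)) := by
  obtain ⟨hy0, hy1⟩ := hy
  rw [tendsto_iff_dist_tendsto_zero]
  have h2 : Tendsto (fun h : ℝ => 2 * h) (nhdsWithin 0 (Set.Ioi 0)) (nhds 0) := by
    have : Tendsto (fun h : ℝ => 2 * h) (nhds 0) (nhds (2 * 0)) :=
      (continuous_const.mul continuous_id).tendsto 0
    rw [mul_zero] at this
    exact this.mono_left nhdsWithin_le_nhds
  refine squeeze_zero' (Eventually.of_forall fun _ => dist_nonneg) ?_ h2
  filter_upwards [Ioo_mem_nhdsGT (show (0:ℝ) < 1 / 2 by norm_num)] with h hh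
  obtain ⟨hp, hl⟩ := hh
  have hyh0 : 0 ≤ y * h := by positivity
  have hyh : y * h ≤ h := by nlinarith
  have habs : |-(y * h)| = y * h := by rw [abs_neg, abs_of_nonneg hyh0]
  have key := Real.abs_log_sub_add_sum_range_le (x := -(y * h)) (by rw [habs]; linarith) 2
  rw [habs] at key
  simp only [Finset.sum_range_succ, Finset.sum_range_zero] at key
  have h3 : (y * h) ^ (2 + 1) / (1 - y * h) ≤ 2 * h ^ 3 := by
    rw [div_le_iff₀ (by linarith)]
    have : (y * h) ^ 3 ≤ h ^ 3 := pow_le_pow_left₀ hyh0 hyh 3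
    have : 0 < h ^ 3 := by positivity
    norm_num
    nlinarith
  rw [Real.dist_eq]
  have e : (Real.log (1 + y * h) - y * h) / h ^ 2 - -y ^ 2 / 2
      = (Real.log (1 + y * h) - y * h + (y * h) ^ 2 / 2) / h ^ 2 := by
    field_simp
    ring
  rw [e, abs_div, abs_of_pos (by positivity : 0 < h ^ 2), div_le_iff₀ (by positivity)]
  refine le_trans (le_of_eq ?_) (key.trans (h3.trans (le_of_eq (by ring))))
  congr 1
  rw [sub_neg_eq_add]
  push_cast
  ring

theorem stmt10 (μ : ℝ) (hμ : 0 < μ) (x : ℝ) (hx : x ∈ Set.Icc (0:ℝ) 1) :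
    Tendsto (fun n : ℕ => (n : ℝ) * (aFun μ n x - x)) atTop
      (nhds ((x - x ^ 2) / (2 * (1 + μ)))) := by
  have hc : 0 < 1 + μ := by linarith
  have ht : Tendsto (fun n : ℕ => 1 / ((n : ℝ) * (1 + μ))) atTop (nhdsWithin 0 (Set.Ioi 0)) := by
    simp only [one_div]
    exact tendsto_inv_atTop_nhdsGT_zero.comp
      (tendsto_natCast_atTop_atTop.atTop_mul_const hc)
  have h0 : Tendsto (fun h : ℝ => h) (nhdsWithin 0 (Set.Ioi 0)) (nhds 0) :=
    tendsto_id.mono_left nhdsWithin_le_nhds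
  have g1 := G_lim 1 ⟨zero_le_one, le_rfl⟩
  have gx := G_lim x hx
  have main := (((gx.sub (g1.const_mul x)).div ((h0.mul g1).const_add 1)
    (by norm_num)).const_mul (1 / (1 + μ))).comp ht
  have e : (x - x ^ 2) / (2 * (1 + μ))
      = 1 / (1 + μ) * ((-x ^ 2 / 2 - x * (-1 ^ 2 / 2)) / (1 + 0 * (-1 ^ 2 / 2))) := by
    field_simp
    ring
  rw [e]
  refine main.congr' ?_
  filter_upwards [eventually_gt_atTop 0] with n hn
  have hn' : (0:ℝ) < n := by exact_mod_cast hn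
  simp only [Function.comp, aFun, Pi.div_apply]
  have ex : x / ((n:ℝ) * (1 + μ)) = x * (1 / ((n:ℝ) * (1 + μ))) := by ring
  rw [ex]
  have hnn : (n:ℝ) = 1 / (1 + μ) / (1 / ((n:ℝ) * (1 + μ))) := by field_simp
  have hp : 0 < 1 / ((n:ℝ) * (1 + μ)) := by positivity
  generalize 1 / ((n:ℝ) * (1 + μ)) = h at *
  rw [hnn, one_mul]
  have hL : 0 < Real.log (1 + h) := Real.log_pos (by linarith)
  have hd : 1 + h * ((Real.log (1 + h) - h) / h ^ 2) = Real.log (1 + h) / h := by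
    field_simp
    ring
  rw [hd]
  generalize Real.log (1 + h) = L at *
  field_simp
  ring
end

section
/- Let μ > 0 and set γ_n := max_{x ∈ [0,1]} (a_n(x) − x), where a_n(x) := ln(1 + x/(n(1+μ))) / ln(1 + 1/(n(1+μ))). Then lim_{n→∞} n · γ_n = 1/(8(1+μ)); in particular √n · γ_n = O(1/√n) as n → ∞. -/
open Real Filter Set

/-- `γ_n := max_{x ∈ [0,1]} (a_n(x) - x)`. -/
noncomputable def gammaN (μ : ℝ) (n : ℕ) : ℝ :=
  sSup ((fun x => aFun μ n x - x) '' Set.Icc (0:ℝ) 1)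

theorem log_lower (y : ℝ) (hy : 0 ≤ y) : y - y ^ 2 / 2 ≤ Real.log (1 + y) := by
  have hd : ∀ z : ℝ, 0 ≤ z → HasDerivAt (fun y : ℝ => Real.log (1 + y) - (y - y ^ 2 / 2))
      (1 / (1 + z) - (1 - (2 * z) / 2)) z := by
    intro z hz
    have h1 := ((hasDerivAt_id z).const_add 1).log (by simp; linarith)
    have h2 := (hasDerivAt_id z).sub (((hasDerivAt_id z).pow 2).div_const 2)
    exact (h1.sub h2).congr_deriv (by simp)
  have hm : MonotoneOn (fun y : ℝ => Real.log (1 + y) - (y - y ^ 2 / 2)) (Ici 0) := by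
    apply monotoneOn_of_deriv_nonneg (convex_Ici 0)
    · intro z hz
      exact (hd z hz).continuousAt.continuousWithinAt
    · intro z hz
      rw [interior_Ici] at hz
      exact (hd z (le_of_lt hz)).differentiableAt.differentiableWithinAt
    · intro z hz
      rw [interior_Ici] at hz
      have hz : 0 < z := hz
      rw [(hd z hz.le).deriv]
      have : 1 / (1 + z) - (1 - (2 * z) / 2) = z ^ 2 / (1 + z) := by field_simp; ring
      rw [this]; positivity
  have := hm (show (0:ℝ) ∈ Ici 0 by simp) hy hy
  simp at this
  linarith

theorem log_upper (y : ℝ) (hy : 0 ≤ y) : Real.log (1 + y) ≤ y - y ^ 2 / 2 + y ^ 3 / 3 := by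
  have hd : ∀ z : ℝ, 0 ≤ z → HasDerivAt
      (fun y : ℝ => (y - y ^ 2 / 2 + y ^ 3 / 3) - Real.log (1 + y))
      ((1 - (2 * z) / 2 + (3 * z ^ 2) / 3) - 1 / (1 + z)) z := by
    intro z hz
    have h1 := ((hasDerivAt_id z).const_add 1).log (by simp; linarith)
    have h2 := ((hasDerivAt_id z).sub (((hasDerivAt_id z).pow 2).div_const 2)).add
      (((hasDerivAt_id z).pow 3).div_const 3)
    exact (h2.sub h1).congr_deriv (by simp)
  have hm : MonotoneOn (fun y : ℝ => (y - y ^ 2 / 2 + y ^ 3 / 3) - Real.log (1 + y))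
      (Ici 0) := by
    apply monotoneOn_of_deriv_nonneg (convex_Ici 0)
    · intro z hz
      exact (hd z hz).continuousAt.continuousWithinAt
    · intro z hz
      rw [interior_Ici] at hz
      exact (hd z (le_of_lt hz)).differentiableAt.differentiableWithinAt
    · intro z hz
      rw [interior_Ici] at hz
      have hz : 0 < z := hz
      rw [(hd z hz.le).deriv]
      have : (1 - (2 * z) / 2 + (3 * z ^ 2) / 3) - 1 / (1 + z) = z ^ 3 / (1 + z) := by
        field_simp; ring
      rw [this]; positivity
  have := hm (show (0:ℝ) ∈ Ici 0 by simp) hy hy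
  simp at this
  linarith

theorem upper_pt (t x : ℝ) (ht : 0 < t) (ht1 : t ≤ 1 / 2) (hx : x ∈ Icc (0:ℝ) 1) :
    Real.log (1 + x * t) / Real.log (1 + t) - x ≤ t * ((1 / 8 + t / 3) / (1 - t / 2)) := by
  obtain ⟨h0, h1⟩ := hx
  have hl := log_lower t ht.le
  have hu := log_upper (x * t) (by positivity)
  have hp : 0 < t - t ^ 2 / 2 := by nlinarith
  have hL : 0 < Real.log (1 + t) := lt_of_lt_of_le hp hl
  have hnum : Real.log (1 + x * t) - x * Real.log (1 + t) ≤ t ^ 2 * (1 / 8 + t / 3) := by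
    have a1 := mul_le_mul_of_nonneg_left hl h0
    have a2 : x ^ 3 * t ^ 3 ≤ t ^ 3 :=
      mul_le_of_le_one_left (by positivity) (pow_le_one₀ h0 h1)
    have a3 : 0 ≤ t ^ 2 * (x - 1 / 2) ^ 2 := by positivity
    nlinarith
  have e : Real.log (1 + x * t) / Real.log (1 + t) - x
      = (Real.log (1 + x * t) - x * Real.log (1 + t)) / Real.log (1 + t) := by
    field_simp
  have e2 : t * ((1 / 8 + t / 3) / (1 - t / 2)) = t ^ 2 * (1 / 8 + t / 3) / (t - t ^ 2 / 2) := by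
    have : t - t ^ 2 / 2 = t * (1 - t / 2) := by ring
    rw [this, sq, mul_assoc t t, mul_div_mul_left _ _ ht.ne', mul_div_assoc]
  rw [e, e2]
  exact div_le_div₀ (by positivity) hnum hp hl

theorem lower_pt (t : ℝ) (ht : 0 < t) (ht1 : t ≤ 1 / 2) :
    t * (1 / 8 - t / 6) ≤ Real.log (1 + (1 / 2) * t) / Real.log (1 + t) - 1 / 2 := by
  have hl := log_lower ((1 / 2) * t) (by positivity)
  have hu := log_upper t ht.le
  have hp : 0 < t - t ^ 2 / 2 := by nlinarith
  have hL : 0 < Real.log (1 + t) := lt_of_lt_of_le hp (log_lower t ht.le)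
  have hLt : Real.log (1 + t) ≤ t := by
    have := Real.log_le_sub_one_of_pos (show 0 < 1 + t by linarith)
    linarith
  rw [le_sub_iff_add_le, le_div_iff₀ hL]
  have h : 0 ≤ t * (1 / 8 - t / 6) := mul_nonneg ht.le (by linarith)
  have := mul_le_mul_of_nonneg_left hLt h
  nlinarith

theorem gamma_bounds (μ : ℝ) (hμ : 0 < μ) (n : ℕ) (t : ℝ) (htd : t = 1 / (n * (1 + μ)))
    (ht : 0 < t) (ht1 : t ≤ 1 / 2) :
    t * (1 / 8 - t / 6) ≤ gammaN μ n ∧ gammaN μ n ≤ t * ((1 / 8 + t / 3) / (1 - t / 2)) := by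
  have ha : ∀ x, aFun μ n x = Real.log (1 + x * t) / Real.log (1 + t) := by
    intro x
    rw [aFun, htd, mul_one_div]
  have hub : ∀ y ∈ (fun x => aFun μ n x - x) '' Set.Icc (0:ℝ) 1,
      y ≤ t * ((1 / 8 + t / 3) / (1 - t / 2)) := by
    rintro _ ⟨x, hx, rfl⟩
    simp only [ha]
    exact upper_pt t x ht ht1 hx
  constructor
  · refine (lower_pt t ht ht1).trans (le_csSup ⟨_, hub⟩ ⟨1 / 2, by constructor <;> norm_num, ?_⟩)
    simp only [ha]
  · exact csSup_le ⟨_, ⟨0, by simp, rfl⟩⟩ hub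

theorem stmt11 (μ : ℝ) (hμ : 0 < μ) :
    Tendsto (fun n : ℕ => (n : ℝ) * gammaN μ n) atTop (nhds (1 / (8 * (1 + μ)))) ∧
    (fun n : ℕ => Real.sqrt n * gammaN μ n) =O[atTop] (fun n : ℕ => 1 / Real.sqrt n) := by
  have hμ1 : 0 < 1 + μ := by linarith
  have ht : Tendsto (fun n : ℕ => 1 / ((n:ℝ) * (1 + μ))) atTop (nhds 0) := by
    apply Tendsto.const_div_atTop
    exact tendsto_natCast_atTop_atTop.atTop_mul_const hμ1
  have hmain : Tendsto (fun n : ℕ => (n : ℝ) * gammaN μ n) atTop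
      (nhds (1 / (8 * (1 + μ)))) := by
    have hlow : Tendsto (fun n : ℕ => (1 / 8 - (1 / ((n:ℝ) * (1 + μ))) / 6) / (1 + μ)) atTop
        (nhds (1 / (8 * (1 + μ)))) := by
      have := ((ht.div_const 6).const_sub (1 / 8)).div_const (1 + μ)
      convert this using 2
      field_simp
      norm_num
    have hup : Tendsto (fun n : ℕ => ((1 / 8 + (1 / ((n:ℝ) * (1 + μ))) / 3) /
        (1 - (1 / ((n:ℝ) * (1 + μ))) / 2)) / (1 + μ)) atTop
        (nhds (1 / (8 * (1 + μ)))) := by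
      have := (((ht.div_const 3).const_add (1 / 8)).div ((ht.div_const 2).const_sub 1)
        (by norm_num)).div_const (1 + μ)
      have e : (1 / 8 + 0 / 3) / (1 - 0 / 2) / (1 + μ) = 1 / (8 * (1 + μ)) := by
        field_simp
        norm_num
      rw [e] at this
      exact this
    have hev : ∀ᶠ n : ℕ in atTop, 0 < n ∧ 1 / ((n:ℝ) * (1 + μ)) ≤ 1 / 2 :=
      (eventually_gt_atTop 0).and (ht.eventually_le_const (by norm_num))
    have key : ∀ n : ℕ, 0 < n → ∀ c : ℝ, (n:ℝ) * (1 / ((n:ℝ) * (1 + μ)) * c) = c / (1 + μ) := by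
      intro n hn c
      have : (n:ℝ) ≠ 0 := by positivity
      field_simp
    refine tendsto_of_tendsto_of_tendsto_of_le_of_le' hlow hup ?_ ?_
    · filter_upwards [hev] with n ⟨hn, h⟩
      rw [← key n hn]
      exact mul_le_mul_of_nonneg_left (gamma_bounds μ hμ n _ rfl (by positivity) h).1
        (by positivity)
    · filter_upwards [hev] with n ⟨hn, h⟩
      rw [← key n hn]
      exact mul_le_mul_of_nonneg_left (gamma_bounds μ hμ n _ rfl (by positivity) h).2
        (by positivity)
  refine ⟨hmain, ?_⟩
  have hO := (hmain.isBigO_one ℝ).mul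
    (Asymptotics.isBigO_refl (fun n : ℕ => 1 / Real.sqrt n) atTop)
  refine hO.congr' ?_ (by simp)
  filter_upwards [eventually_gt_atTop 0] with n hn
  have h1 : 0 < Real.sqrt n := Real.sqrt_pos.2 (by positivity)
  have h2 : (n:ℝ) = Real.sqrt n * Real.sqrt n := (Real.mul_self_sqrt (by positivity)).symm
  rw [mul_one_div, div_eq_iff h1.ne']
  nth_rewrite 1 [h2]
  ring
end

section
/- (Voronovskaja-type formula) Let μ > 0 and let f : [0,1] → ℝ be twice continuously differentiable on [0,1]. Then for every x ∈ [0,1], lim_{n→∞} n · (L_n(f, x) − f(x)) = ln_μ(x) · ((x − x²)/2) · ( f_μ'(x)/(1+μ) + f_μ''(x) ), where f_μ(t) := f(t)/ln(1+μ+t). -/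
open Real Filter Set

/-- expectation of `h` under the Bernstein weights -/
noncomputable def EB (n : ℕ) (y : ℝ) (h : ℝ → ℝ) : ℝ :=
  ∑ k ∈ Finset.range (n + 1), h (k : ℝ) * pB n k y

lemma EB_add (n : ℕ) (y : ℝ) (h g : ℝ → ℝ) :
    EB n y (fun t => h t + g t) = EB n y h + EB n y g := by
  simp only [EB, add_mul, Finset.sum_add_distrib]

lemma EB_smul (n : ℕ) (y c : ℝ) (h : ℝ → ℝ) :
    EB n y (fun t => c * h t) = c * EB n y h := by
  simp only [EB, Finset.mul_sum, mul_assoc]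

lemma pB_succ (n k : ℕ) (y : ℝ) :
    pB (n + 1) (k + 1) y = y * pB n k y + (1 - y) * pB n (k + 1) y := by
  unfold pB
  rcases lt_trichotomy k n with h | h | h
  · obtain ⟨d, rfl⟩ := Nat.exists_eq_add_of_lt h
    have h1 : k + d + 1 + 1 - (k + 1) = d + 1 := by omega
    have h2 : k + d + 1 - k = d + 1 := by omega
    have h3 : k + d + 1 - (k + 1) = d := by omega
    rw [h1, h2, h3, Nat.choose_succ_succ]
    push_cast
    ring
  · subst h
    simp
    ring
  · rw [Nat.choose_eq_zero_of_lt (by omega : n + 1 < k + 1), Nat.choose_eq_zero_of_lt h,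
      Nat.choose_eq_zero_of_lt (by omega : n < k + 1)]
    simp

lemma EB_succ (n : ℕ) (y : ℝ) (h : ℝ → ℝ) :
    EB (n + 1) y h = (1 - y) * EB n y h + y * EB n y (fun t => h (t + 1)) := by
  unfold EB
  rw [Finset.sum_range_succ' _ (n + 1)]
  have e1 : ∑ k ∈ Finset.range (n + 1), h (k : ℝ) * pB n k y
      = ∑ k ∈ Finset.range (n + 1), h ((k + 1 : ℕ) : ℝ) * pB n (k + 1) y
        + h ((0 : ℕ) : ℝ) * pB n 0 y := by
    rw [← Finset.sum_range_succ' (fun k : ℕ => h (k : ℝ) * pB n k y) (n + 1),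
      Finset.sum_range_succ _ (n + 1)]
    simp [pB]
  have e2 : pB (n + 1) 0 y = (1 - y) * pB n 0 y := by
    simp [pB]; ring
  rw [e1, e2, mul_add, Finset.mul_sum, Finset.mul_sum]
  have e3 : ∀ k ∈ Finset.range (n + 1), h ((k + 1 : ℕ) : ℝ) * pB (n + 1) (k + 1) y
      = (1 - y) * (h ((k + 1 : ℕ) : ℝ) * pB n (k + 1) y) + y * (h ((k : ℝ) + 1) * pB n k y) := by
    intro k _
    rw [pB_succ]; push_cast; ring
  rw [Finset.sum_congr rfl e3, Finset.sum_add_distrib]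
  ring

/-- Moments of the centred binomial distribution. -/
lemma EB_moments (n : ℕ) (y : ℝ) :
    EB n y (fun _ => 1) = 1 ∧ EB n y (fun t => t - n * y) = 0 ∧
    EB n y (fun t => (t - n * y) ^ 2) = n * y * (1 - y) ∧
    EB n y (fun t => (t - n * y) ^ 3) = n * y * (1 - y) * (1 - 2 * y) ∧
    EB n y (fun t => (t - n * y) ^ 4) =
      n * y * (1 - y) * (1 - 6 * (y * (1 - y))) + 3 * (n * y * (1 - y)) ^ 2 := by
  induction n with
  | zero => simp [EB, pB]
  | succ n ih =>
    obtain ⟨h0, h1, h2, h3, h4⟩ := ih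
    have key : ∀ b c0 c1 c2 c3 c4 : ℝ, EB n y (fun t => c0 * 1 + (c1 * (t - n * y) +
        (c2 * (t - n * y) ^ 2 + (c3 * (t - n * y) ^ 3 + c4 * (t - n * y) ^ 4)))) =
        c0 + c2 * (n * y * (1 - y)) + c3 * (n * y * (1 - y) * (1 - 2 * y)) +
        c4 * (n * y * (1 - y) * (1 - 6 * (y * (1 - y))) + 3 * (n * y * (1 - y)) ^ 2) := by
      intro b c0 c1 c2 c3 c4
      rw [EB_add, EB_add, EB_add, EB_add, EB_smul, EB_smul, EB_smul, EB_smul, EB_smul,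
        h0, h1, h2, h3, h4]
      ring
    have sh1 : ∀ b : ℝ, EB n y (fun t => t - n * y + b) = b := by
      intro b
      have := key b b 1 0 0 0
      convert this using 2
      · ext t; ring
      · ring
    have sh2 := fun b : ℝ => key b (b ^ 2) (2 * b) 1 0 0
    have sh3 := fun b : ℝ => key b (b ^ 3) (3 * b ^ 2) (3 * b) 1 0
    have sh4 := fun b : ℝ => key b (b ^ 4) (4 * b ^ 3) (6 * b ^ 2) (4 * b) 1
    refine ⟨?_, ?_, ?_, ?_, ?_⟩
    · rw [EB_succ, h0]; ring
    · rw [EB_succ]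
      have a1 : (fun t : ℝ => t - ((n + 1 : ℕ) : ℝ) * y) = fun t => t - n * y + (-y) := by
        ext t; push_cast; ring
      have a2 : (fun t : ℝ => t + 1 - ((n + 1 : ℕ) : ℝ) * y) = fun t => t - n * y + (1 - y) := by
        ext t; push_cast; ring
      rw [a1, a2, sh1, sh1]; ring
    · rw [EB_succ]
      have a1 := sh2 (-y)
      have a2 := sh2 (1 - y)
      rw [show (fun t : ℝ => (t - ((n + 1 : ℕ) : ℝ) * y) ^ 2) = _ from ?_, a1,
        show (fun t : ℝ => (t + 1 - ((n + 1 : ℕ) : ℝ) * y) ^ 2) = _ from ?_, a2]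
      · push_cast; ring
      · ext t; push_cast; ring
      · ext t; push_cast; ring
    · rw [EB_succ]
      have a1 := sh3 (-y)
      have a2 := sh3 (1 - y)
      rw [show (fun t : ℝ => (t - ((n + 1 : ℕ) : ℝ) * y) ^ 3) = _ from ?_, a1,
        show (fun t : ℝ => (t + 1 - ((n + 1 : ℕ) : ℝ) * y) ^ 3) = _ from ?_, a2]
      · push_cast; ring
      · ext t; push_cast; ring
      · ext t; push_cast; ring
    · rw [EB_succ]
      have a1 := sh4 (-y)
      have a2 := sh4 (1 - y)
      rw [show (fun t : ℝ => (t - ((n + 1 : ℕ) : ℝ) * y) ^ 4) = _ from ?_, a1,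
        show (fun t : ℝ => (t + 1 - ((n + 1 : ℕ) : ℝ) * y) ^ 4) = _ from ?_, a2]
      · push_cast; ring
      · ext t; push_cast; ring
      · ext t; push_cast; ring

lemma log_bound (u : ℝ) (h0 : 0 ≤ u) (h1 : u ≤ 1 / 2) :
    |Real.log (1 + u) - (u - u ^ 2 / 2)| ≤ 2 * u ^ 3 := by
  have h := Real.abs_log_sub_add_sum_range_le (x := -u) (by rw [abs_neg, abs_of_nonneg h0]; linarith) 2
  rw [abs_neg, abs_of_nonneg h0] at h
  simp only [Finset.sum_range_succ, Finset.sum_range_zero] at h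
  norm_num at h
  have e : -u + u ^ 2 / 2 + Real.log (1 + u) = Real.log (1 + u) - (u - u ^ 2 / 2) := by ring
  rw [e] at h
  refine h.trans ?_
  rw [div_le_iff₀ (by linarith)]
  nlinarith [pow_nonneg h0 3]

lemma log_ratio (x : ℝ) (hx : x ∈ Set.Icc (0:ℝ) 1) :
    Tendsto (fun c : ℝ => (Real.log (1 + x * c) / Real.log (1 + c) - x) / c) (nhdsWithin 0 (Ioi 0))
      (nhds ((x - x ^ 2) / 2)) := by
  have hsm : ∀ᶠ c : ℝ in nhdsWithin 0 (Ioi 0), 0 < c ∧ c < 1 / 2 :=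
    Ioo_mem_nhdsGT (by norm_num : (0:ℝ) < 1 / 2)
  have hid : Tendsto (fun c : ℝ => c) (nhdsWithin 0 (Ioi 0)) (nhds 0) :=
    tendsto_id.mono_left nhdsWithin_le_nhds
  have A : Tendsto (fun c : ℝ => (Real.log (1 + x * c) - x * Real.log (1 + c)) / c ^ 2)
      (nhdsWithin 0 (Ioi 0)) (nhds ((x - x ^ 2) / 2)) := by
    rw [tendsto_iff_norm_sub_tendsto_zero]
    refine squeeze_zero' (Eventually.of_forall fun _ => norm_nonneg _)
      (g := fun c => 4 * c) ?_ (by simpa using hid.const_mul 4)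
    filter_upwards [hsm] with c ⟨hc, hc2⟩
    have b1 := abs_le.mp (log_bound c hc.le hc2.le)
    have hxc : x * c ≤ c := by nlinarith [hx.2]
    have hxc0 : 0 ≤ x * c := mul_nonneg hx.1 hc.le
    have b2 := abs_le.mp (log_bound (x * c) hxc0 (by linarith))
    have hc3 : (x * c) ^ 3 ≤ c ^ 3 := pow_le_pow_left₀ hxc0 hxc 3
    have e : (Real.log (1 + x * c) - x * Real.log (1 + c)) / c ^ 2 - (x - x ^ 2) / 2
      = ((Real.log (1 + x * c) - (x * c - (x * c) ^ 2 / 2)) -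
        x * (Real.log (1 + c) - (c - c ^ 2 / 2))) / c ^ 2 := by
      field_simp; ring
    rw [e, Real.norm_eq_abs, abs_div, abs_of_pos (pow_pos hc 2), div_le_iff₀ (pow_pos hc 2)]
    have hc3' := pow_pos hc 3
    have b3 : |x * (Real.log (1 + c) - (c - c ^ 2 / 2))| ≤ 2 * c ^ 3 := by
      rw [abs_mul, abs_of_nonneg hx.1]
      have := log_bound c hc.le hc2.le
      nlinarith [abs_nonneg (Real.log (1 + c) - (c - c ^ 2 / 2)), hx.1, hx.2]
    have b3' := abs_le.mp b3
    rw [abs_le]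
    constructor <;> nlinarith
  have B : Tendsto (fun c : ℝ => Real.log (1 + c) / c) (nhdsWithin 0 (Ioi 0)) (nhds 1) := by
    rw [tendsto_iff_norm_sub_tendsto_zero]
    refine squeeze_zero' (Eventually.of_forall fun _ => norm_nonneg _)
      (g := fun c => 4 * c) ?_ (by simpa using hid.const_mul 4)
    filter_upwards [hsm] with c ⟨hc, hc2⟩
    have b1 := abs_le.mp (log_bound c hc.le hc2.le)
    have e : Real.log (1 + c) / c - 1 = (Real.log (1 + c) - c) / c := by field_simp
    rw [e, Real.norm_eq_abs, abs_div, abs_of_pos hc, div_le_iff₀ hc, abs_le]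
    have : c ^ 3 ≤ c ^ 2 / 2 := by nlinarith [pow_pos hc 2]
    constructor <;> nlinarith [pow_pos hc 2]
  have C := A.div B one_ne_zero
  rw [div_one] at C
  refine C.congr' ?_
  filter_upwards [hsm] with c ⟨hc, hc2⟩
  have hl : 0 < Real.log (1 + c) := Real.log_pos (by linarith)
  simp only [Pi.div_apply]
  field_simp

lemma aFun_lim (μ : ℝ) (hμ : 0 < μ) (x : ℝ) (hx : x ∈ Set.Icc (0:ℝ) 1) :
    Tendsto (fun n : ℕ => (n : ℝ) * (aFun μ n x - x)) atTop
      (nhds ((x - x ^ 2) / 2 / (1 + μ))) := by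
  have hc : Tendsto (fun n : ℕ => 1 / ((n : ℝ) * (1 + μ))) atTop (nhdsWithin 0 (Ioi 0)) := by
    rw [tendsto_nhdsWithin_iff]
    constructor
    · have := (tendsto_one_div_atTop_nhds_zero_nat (𝕜 := ℝ)).mul_const (1 / (1 + μ))
      rw [zero_mul] at this
      refine this.congr fun n => ?_
      rw [div_mul_div_comm, one_mul]
    · filter_upwards [eventually_gt_atTop 0] with n hn
      have : (0:ℝ) < n := by exact_mod_cast hn
      simp only [mem_Ioi]; positivity
  have := ((log_ratio x hx).comp hc).div_const (1 + μ)
  refine this.congr' ?_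
  filter_upwards [eventually_gt_atTop 0] with n hn
  have hn' : (0:ℝ) < n := by exact_mod_cast hn
  have : (1 + μ) ≠ 0 := by positivity
  simp only [Function.comp, aFun, mul_one_div]
  generalize Real.log (1 + x / (n * (1 + μ))) / Real.log (1 + 1 / (n * (1 + μ))) - x = z
  field_simp

/-- Taylor remainder bound. -/
lemma taylor_rem (g : ℝ → ℝ) (hg : ContDiffOn ℝ 2 g (Set.Icc (0:ℝ) 1))
    (x : ℝ) (hx : x ∈ Set.Icc (0:ℝ) 1) (ε : ℝ) (hε : 0 < ε) :
    ∃ C : ℝ, 0 ≤ C ∧ ∀ t ∈ Set.Icc (0:ℝ) 1,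
      |g t - (g x + derivWithin g (Set.Icc (0:ℝ) 1) x * (t - x) +
        derivWithin (derivWithin g (Set.Icc (0:ℝ) 1)) (Set.Icc (0:ℝ) 1) x / 2 * (t - x) ^ 2)|
        ≤ ε * (t - x) ^ 2 + C * (t - x) ^ 4 := by
  have hT := taylor_isLittleO (n := 2) (f := g) (convex_Icc (0:ℝ) 1) hx (by exact_mod_cast hg)
  have e : ∀ t, taylorWithinEval g 2 (Set.Icc (0:ℝ) 1) x t =
      (g x + derivWithin g (Set.Icc (0:ℝ) 1) x * (t - x) +
        derivWithin (derivWithin g (Set.Icc (0:ℝ) 1)) (Set.Icc (0:ℝ) 1) x / 2 * (t - x) ^ 2) := by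
    intro t
    have i2 : iteratedDerivWithin 2 g (Set.Icc (0:ℝ) 1) x =
        derivWithin (derivWithin g (Set.Icc (0:ℝ) 1)) (Set.Icc (0:ℝ) 1) x := by
      rw [iteratedDerivWithin_succ]
      congr 1
      ext z
      rw [iteratedDerivWithin_one]
    rw [taylorWithinEval_succ, taylorWithinEval_succ, taylor_within_zero_eval, zero_add,
      iteratedDerivWithin_one, one_add_one_eq_two, i2]
    simp
    ring
  simp only [e] at hT
  set R : ℝ → ℝ := fun t => g t - (g x + derivWithin g (Set.Icc (0:ℝ) 1) x * (t - x) +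
        derivWithin (derivWithin g (Set.Icc (0:ℝ) 1)) (Set.Icc (0:ℝ) 1) x / 2 * (t - x) ^ 2) with hR
  have hcont : ContinuousOn R (Set.Icc (0:ℝ) 1) := by
    refine hg.continuousOn.sub (Continuous.continuousOn ?_)
    fun_prop
  obtain ⟨M, hM⟩ := isCompact_Icc.exists_bound_of_continuousOn hcont
  have hM0 : 0 ≤ M := (norm_nonneg _).trans (hM x hx)
  have h1 := hT.def hε
  rw [eventually_nhdsWithin_iff, Metric.eventually_nhds_iff] at h1
  obtain ⟨δ, hδ, h1⟩ := h1
  refine ⟨M / δ ^ 4, by positivity, fun t ht => ?_⟩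
  have hd4 : 0 ≤ (t - x) ^ 4 := by positivity
  by_cases hd : dist t x < δ
  · have := h1 hd ht
    rw [Real.norm_eq_abs, Real.norm_eq_abs, abs_of_nonneg (sq_nonneg (t - x))] at this
    have h2 : 0 ≤ M / δ ^ 4 * (t - x) ^ 4 := by positivity
    linarith
  · have h2 := hM t ht
    rw [Real.norm_eq_abs] at h2
    rw [Real.dist_eq] at hd
    push Not at hd
    have h3 : δ ^ 4 ≤ (t - x) ^ 4 := by
      rw [← Even.pow_abs (by decide : Even 4) (t - x)]
      exact pow_le_pow_left₀ hδ.le hd 4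
    have h4 : M ≤ M / δ ^ 4 * (t - x) ^ 4 := by
      rw [div_mul_eq_mul_div, le_div_iff₀ (by positivity)]
      exact mul_le_mul_of_nonneg_left h3 hM0
    have h5 : 0 ≤ ε * (t - x) ^ 2 := by positivity
    linarith

lemma Bop_add (n : ℕ) (y : ℝ) (h g : ℝ → ℝ) :
    Bop n (fun t => h t + g t) y = Bop n h y + Bop n g y := by
  simp only [Bop, add_mul, Finset.sum_add_distrib]

lemma Bop_smul (n : ℕ) (y c : ℝ) (h : ℝ → ℝ) :
    Bop n (fun t => c * h t) y = c * Bop n h y := by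
  simp only [Bop, Finset.mul_sum, mul_assoc]

lemma Bop_mono (n : ℕ) (hn : 0 < n) (y : ℝ) (hy : y ∈ Set.Icc (0:ℝ) 1) (h g : ℝ → ℝ)
    (hhg : ∀ t ∈ Set.Icc (0:ℝ) 1, h t ≤ g t) : Bop n h y ≤ Bop n g y := by
  have hn' : (0:ℝ) < n := by exact_mod_cast hn
  refine Finset.sum_le_sum fun k hk => mul_le_mul_of_nonneg_right (hhg _ ⟨by positivity, ?_⟩)
    (pB_nonneg n k y hy)
  rw [div_le_one hn']
  exact_mod_cast Nat.lt_succ_iff.mp (Finset.mem_range.mp hk)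

lemma Bop_moments (n : ℕ) (hn : 0 < n) (y : ℝ) :
    Bop n (fun _ => 1) y = 1 ∧ Bop n (fun t => t - y) y = 0 ∧
    Bop n (fun t => (t - y) ^ 2) y = y * (1 - y) / n ∧
    Bop n (fun t => (t - y) ^ 4) y =
      (n * y * (1 - y) * (1 - 6 * (y * (1 - y))) + 3 * (n * y * (1 - y)) ^ 2) / n ^ 4 := by
  have hn' : (n:ℝ) ≠ 0 := by positivity
  obtain ⟨h0, h1, h2, -, h4⟩ := EB_moments n y
  have key : ∀ m : ℕ, Bop n (fun t => (t - y) ^ m) y = EB n y (fun t => (t - n * y) ^ m) / n ^ m := by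
    intro m
    rw [div_eq_inv_mul, ← EB_smul]
    refine Finset.sum_congr rfl fun k _ => ?_
    have : (k : ℝ) / n - y = (k - n * y) / n := by field_simp
    simp only
    rw [this, div_pow, div_eq_inv_mul]
  refine ⟨h0, ?_, ?_, ?_⟩
  · have := key 1
    simp only [pow_one] at this
    rw [this, h1, zero_div]
  · rw [key, h2]; field_simp
  · rw [key, h4]

lemma voron (g : ℝ → ℝ) (hg : ContDiffOn ℝ 2 g (Set.Icc (0:ℝ) 1))
    (x : ℝ) (hx : x ∈ Set.Icc (0:ℝ) 1) (a : ℕ → ℝ) (ha : ∀ n, 0 < n → a n ∈ Set.Icc (0:ℝ) 1)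
    (L : ℝ) (hL : Tendsto (fun n : ℕ => (n : ℝ) * (a n - x)) atTop (nhds L)) :
    Tendsto (fun n : ℕ => (n : ℝ) * (Bop n g (a n) - g x)) atTop
      (nhds (derivWithin g (Set.Icc (0:ℝ) 1) x * L +
        derivWithin (derivWithin g (Set.Icc (0:ℝ) 1)) (Set.Icc (0:ℝ) 1) x / 2 * (x - x ^ 2))) := by
  set d1 := derivWithin g (Set.Icc (0:ℝ) 1) x
  set d2 := derivWithin (derivWithin g (Set.Icc (0:ℝ) 1)) (Set.Icc (0:ℝ) 1) x
  have hinv : Tendsto (fun n : ℕ => 1 / (n : ℝ)) atTop (nhds 0) := tendsto_one_div_atTop_nhds_zero_nat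
  have hax0 : Tendsto (fun n : ℕ => a n - x) atTop (nhds 0) := by
    have := hL.mul hinv
    rw [mul_zero] at this
    refine this.congr' ?_
    filter_upwards [eventually_gt_atTop 0] with n hn
    have : (n:ℝ) ≠ 0 := by positivity
    field_simp
  have hax : Tendsto a atTop (nhds x) := by
    simpa using hax0.add_const x
  have b1 : ∀ n : ℕ, 0 < n → Bop n (fun t => t - x) (a n) = a n - x := by
    intro n hn
    obtain ⟨h0, h1, -, -⟩ := Bop_moments n hn (a n)
    have : (fun t : ℝ => t - x) = fun t => (t - a n) + (a n - x) * 1 := by ext t; ring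
    rw [this, Bop_add, Bop_smul, h0, h1]; ring
  have b2 : ∀ n : ℕ, 0 < n → Bop n (fun t => (t - x) ^ 2) (a n) =
      a n * (1 - a n) / n + (a n - x) ^ 2 := by
    intro n hn
    obtain ⟨h0, h1, h2, -⟩ := Bop_moments n hn (a n)
    have : (fun t : ℝ => (t - x) ^ 2) = fun t => (t - a n) ^ 2 +
      (2 * (a n - x) * (t - a n) + (a n - x) ^ 2 * 1) := by ext t; ring
    rw [this, Bop_add, Bop_add, Bop_smul, Bop_smul, h0, h1, h2]; ring
  have b4 : ∀ n : ℕ, 0 < n → Bop n (fun t => (t - x) ^ 4) (a n) ≤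
      8 * ((n * a n * (1 - a n) * (1 - 6 * (a n * (1 - a n))) +
        3 * (n * a n * (1 - a n)) ^ 2) / n ^ 4) + 8 * (a n - x) ^ 4 := by
    intro n hn
    obtain ⟨h0, -, -, h4⟩ := Bop_moments n hn (a n)
    have h := Bop_mono n hn (a n) (ha n hn) (fun t => (t - x) ^ 4)
      (fun t => 8 * (t - a n) ^ 4 + 8 * (a n - x) ^ 4 * 1) (by
        intro t _
        have h1 : ∀ p q : ℝ, (p + q) ^ 4 ≤ 8 * p ^ 4 + 8 * q ^ 4 := by
          intro p q
          have e1 : (p + q) ^ 2 ≤ 2 * (p ^ 2 + q ^ 2) := by nlinarith [sq_nonneg (p - q)]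
          have e2 := pow_le_pow_left₀ (sq_nonneg (p + q)) e1 2
          nlinarith [sq_nonneg (p ^ 2 - q ^ 2)]
        have := h1 (t - a n) (a n - x)
        simp only [sub_add_sub_cancel, mul_one] at this ⊢
        exact this)
    rw [Bop_add, Bop_smul, Bop_smul, h0, h4, mul_one] at h
    exact h
  -- limits
  have l2 : Tendsto (fun n : ℕ => (n : ℝ) * Bop n (fun t => (t - x) ^ 2) (a n)) atTop
      (nhds (x - x ^ 2)) := by
    have h := (hax.mul (hax.const_sub 1)).add (hL.mul hax0)
    have e : x * (1 - x) + L * 0 = x - x ^ 2 := by ring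
    rw [e] at h
    refine h.congr' ?_
    filter_upwards [eventually_gt_atTop 0] with n hn
    have : (n:ℝ) ≠ 0 := by positivity
    rw [b2 n hn]
    field_simp
  have l4 : Tendsto (fun n : ℕ => (n : ℝ) * Bop n (fun t => (t - x) ^ 4) (a n)) atTop
      (nhds 0) := by
    have v := hax.mul (hax.const_sub 1)
    have h := ((((hinv.pow 2).mul (v.mul ((v.const_mul 6).const_sub 1))).add
      ((hinv.mul (v.pow 2)).const_mul 3)).const_mul 8).add ((hL.mul (hax0.pow 3)).const_mul 8)
    have e : 8 * (0 ^ 2 * (x * (1 - x) * (1 - 6 * (x * (1 - x)))) + 3 * (0 * (x * (1 - x)) ^ 2)) +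
      8 * (L * 0 ^ 3) = 0 := by ring
    rw [e] at h
    refine squeeze_zero' ?_ ?_ h
    · filter_upwards [eventually_gt_atTop 0] with n hn
      refine mul_nonneg (Nat.cast_nonneg n) (Finset.sum_nonneg fun k _ =>
        mul_nonneg ?_ (pB_nonneg n k _ (ha n hn)))
      positivity
    · filter_upwards [eventually_gt_atTop 0] with n hn
      have hn' : (0:ℝ) < n := by exact_mod_cast hn
      refine (mul_le_mul_of_nonneg_left (b4 n hn) hn'.le).trans (le_of_eq ?_)
      field_simp
  have main : Tendsto (fun n : ℕ => d1 * ((n : ℝ) * (a n - x)) +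
      d2 / 2 * ((n : ℝ) * Bop n (fun t => (t - x) ^ 2) (a n))) atTop
      (nhds (d1 * L + d2 / 2 * (x - x ^ 2))) := (hL.const_mul d1).add (l2.const_mul (d2 / 2))
  have diff : Tendsto (fun n : ℕ => (n : ℝ) * (Bop n g (a n) - g x) -
      (d1 * ((n : ℝ) * (a n - x)) +
      d2 / 2 * ((n : ℝ) * Bop n (fun t => (t - x) ^ 2) (a n)))) atTop (nhds 0) := by
    rw [Metric.tendsto_nhds]
    intro η hη
    obtain ⟨C, hC, hR⟩ := taylor_rem g hg x hx (η / 2) (by positivity)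
    have hb := (l2.const_mul (η / 2)).add (l4.const_mul C)
    have hlt : η / 2 * (x - x ^ 2) + C * 0 < η := by nlinarith [hx.1, hx.2]
    filter_upwards [hb.eventually_lt_const hlt, eventually_gt_atTop 0] with n h1 hn
    have hn' : (0:ℝ) < n := by exact_mod_cast hn
    obtain ⟨h0, -, -, -⟩ := Bop_moments n hn (a n)
    have up := Bop_mono n hn (a n) (ha n hn) g (fun t => g x * 1 + (d1 * (t - x) +
      (d2 / 2 * (t - x) ^ 2 + (η / 2 * (t - x) ^ 2 + C * (t - x) ^ 4)))) (by
        intro t ht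
        have := (abs_le.mp (hR t ht)).2
        linarith)
    have lo := Bop_mono n hn (a n) (ha n hn) (fun t => g x * 1 + (d1 * (t - x) +
      (d2 / 2 * (t - x) ^ 2 + ((-(η / 2)) * (t - x) ^ 2 + (-C) * (t - x) ^ 4)))) g (by
        intro t ht
        have := (abs_le.mp (hR t ht)).1
        linarith)
    simp only [Bop_add, Bop_smul, h0, b1 n hn] at up lo
    have up' := mul_le_mul_of_nonneg_left up hn'.le
    have lo' := mul_le_mul_of_nonneg_left lo hn'.le
    rw [Real.dist_eq, sub_zero, abs_lt]
    constructor <;> linarith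
  have := diff.add main
  rw [zero_add] at this
  refine this.congr fun n => ?_
  ring

theorem stmt12 (μ : ℝ) (hμ : 0 < μ) (f : ℝ → ℝ)
    (hf : ContDiffOn ℝ 2 f (Set.Icc (0:ℝ) 1))
    (x : ℝ) (hx : x ∈ Set.Icc (0:ℝ) 1) :
    Tendsto (fun n : ℕ => (n : ℝ) * (Lop μ n f x - f x)) atTop
      (nhds (logμ μ x * ((x - x ^ 2) / 2) *
        (derivWithin (fun t => f t / logμ μ t) (Set.Icc (0:ℝ) 1) x / (1 + μ) +
          derivWithin (derivWithin (fun t => f t / logμ μ t) (Set.Icc (0:ℝ) 1))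
            (Set.Icc (0:ℝ) 1) x))) := by
  have hpos : ∀ t ∈ Set.Icc (0:ℝ) 1, 0 < logμ μ t := fun t ht =>
    Real.log_pos (by linarith [ht.1])
  have hg : ContDiffOn ℝ 2 (fun t => f t / logμ μ t) (Set.Icc (0:ℝ) 1) := by
    refine hf.div ?_ fun t ht => (hpos t ht).ne'
    refine ContDiffOn.log (by fun_prop) fun t ht => ?_
    have := ht.1
    positivity
  have h := (voron _ hg x hx (fun n => aFun μ n x) (fun n hn => aFun_mem μ hμ n hn x hx) _
    (aFun_lim μ hμ x hx)).const_mul (logμ μ x)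
  have hne := (hpos x hx).ne'
  have hμ' : 1 + μ ≠ 0 := by positivity
  convert h using 2
  · rename_i n
    have e : Lop μ n f x = logμ μ x * Bop n (fun t => f t / logμ μ t) (aFun μ n x) := by
      simp only [Lop, Bop, mul_one_div]
    rw [e]
    field_simp
  · field_simp
end

section
/- (Variation diminishing) Let μ > 0 and let f : [0,1] → ℝ be of bounded variation on [0,1]. Then for every positive integer n, ‖L_n f‖_{BV_μ} ≤ ‖f‖_{BV_μ}, where ‖g‖_{BV_μ} := Var_{[0,1]}(g/ln_μ) + |g(0)| and Var_{[0,1]} denotes the total (Jordan) variation on [0,1]. -/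
open Real Filter Set

/-- de Casteljau recursion -/
noncomputable def casD : ℕ → (ℕ → ℝ) → ℝ → ℝ
  | 0, c, _ => c 0
  | n + 1, c, y => y * casD n (fun k => c (k + 1)) y + (1 - y) * casD n c y

lemma pB_succ_zero (n : ℕ) (y : ℝ) : pB (n + 1) 0 y = (1 - y) * pB n 0 y := by
  simp [pB, pow_succ]; ring

lemma pB_succ_succ (n k : ℕ) (hk : k ≤ n) (y : ℝ) :
    pB (n + 1) (k + 1) y = y * pB n k y + (1 - y) * pB n (k + 1) y := by
  unfold pB
  rw [Nat.choose_succ_succ]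
  rcases hk.lt_or_eq with h | h
  · obtain ⟨m, rfl⟩ := Nat.exists_eq_add_of_lt h
    have e1 : k + m + 1 + 1 - (k + 1) = m + 1 := by omega
    have e2 : k + m + 1 - k = m + 1 := by omega
    have e3 : k + m + 1 - (k + 1) = m := by omega
    rw [e1, e2, e3]
    push_cast
    ring
  · subst h
    simp
    ring

lemma sum_eq_casD (n : ℕ) : ∀ (c : ℕ → ℝ) (y : ℝ),
    ∑ k ∈ Finset.range (n + 1), c k * pB n k y = casD n c y := by
  induction n with
  | zero => intro c y; simp [casD, pB]
  | succ n ih =>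
    intro c y
    rw [casD, ← ih, ← ih, Finset.sum_range_succ']
    have h0 : pB n (n + 1) y = 0 := by simp [pB]
    have h1 : ∑ k ∈ Finset.range (n + 1), c k * pB n k y =
        ∑ k ∈ Finset.range (n + 1), c (k + 1) * pB n (k + 1) y + c 0 * pB n 0 y := by
      rw [← Finset.sum_range_succ' (fun k => c k * pB n k y), Finset.sum_range_succ _ (n + 1), h0]
      ring
    rw [h1, pB_succ_zero]
    have h2 : ∑ k ∈ Finset.range (n + 1), c (k + 1) * pB (n + 1) (k + 1) y =
        ∑ k ∈ Finset.range (n + 1),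
          (y * (c (k + 1) * pB n k y) + (1 - y) * (c (k + 1) * pB n (k + 1) y)) := by
      refine Finset.sum_congr rfl fun k hk => ?_
      rw [pB_succ_succ n k (by have := Finset.mem_range.1 hk; omega)]
      ring
    rw [h2, Finset.sum_add_distrib, ← Finset.mul_sum, ← Finset.mul_sum]
    ring

lemma casD_le (n : ℕ) : ∀ (c d : ℕ → ℝ) (_ : ∀ k, c k ≤ d k) (y : ℝ), 0 ≤ y → y ≤ 1 →
    casD n c y ≤ casD n d y := by
  induction n with
  | zero => intro c d h y _ _; exact h 0
  | succ n ih =>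
    intro c d h y h0 h1
    have a1 := ih _ _ (fun k => h (k + 1)) y h0 h1
    have a2 := ih _ _ h y h0 h1
    have := mul_le_mul_of_nonneg_left a1 h0
    have := mul_le_mul_of_nonneg_left a2 (sub_nonneg.2 h1)
    simp only [casD]
    linarith

lemma casD_mono (n : ℕ) : ∀ (c : ℕ → ℝ) (_ : ∀ k, c k ≤ c (k + 1)) (x y : ℝ), 0 ≤ x → x ≤ y →
    y ≤ 1 → casD n c x ≤ casD n c y := by
  induction n with
  | zero => intro c h x y _ _ _; exact le_rfl
  | succ n ih =>
    intro c h x y h0 h1 h2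
    have a1 := ih _ (fun k => h (k + 1)) x y h0 h1 h2
    have a2 := ih _ h x y h0 h1 h2
    have a3 := casD_le n _ _ h x h0 (h1.trans h2)
    have b1 := mul_le_mul_of_nonneg_left a1 (h0.trans h1)
    have b2 := mul_le_mul_of_nonneg_left a2 (sub_nonneg.2 h2)
    have b3 := mul_nonneg (sub_nonneg.2 h1) (sub_nonneg.2 a3)
    simp only [casD]
    linarith

lemma casD_add (n : ℕ) : ∀ (c d : ℕ → ℝ) (y : ℝ),
    casD n (fun k => c k + d k) y = casD n c y + casD n d y := by
  induction n with
  | zero => intro c d y; rfl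
  | succ n ih => intro c d y; simp only [casD, ih]; ring

lemma casD_neg (n : ℕ) : ∀ (c : ℕ → ℝ) (y : ℝ),
    casD n (fun k => - c k) y = - casD n c y := by
  induction n with
  | zero => intro c y; rfl
  | succ n ih => intro c y; simp only [casD, ih]; ring

lemma casD_zero (n : ℕ) : ∀ (c : ℕ → ℝ), casD n c 0 = c 0 := by
  induction n with
  | zero => intro c; rfl
  | succ n ih => intro c; simp [casD, ih]

lemma casD_one (n : ℕ) : ∀ (c : ℕ → ℝ), casD n c 1 = c n := by
  induction n with
  | zero => intro c; rfl
  | succ n ih => intro c; simp [casD, ih]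

/-- partial variation sums -/
noncomputable def varM (c : ℕ → ℝ) (k : ℕ) : ℝ := ∑ i ∈ Finset.range k, |c (i + 1) - c i|

lemma abs_casD_sub (n : ℕ) (c : ℕ → ℝ) (x y : ℝ) (h0 : 0 ≤ x) (h1 : x ≤ y) (h2 : y ≤ 1) :
    |casD n c y - casD n c x| ≤ casD n (varM c) y - casD n (varM c) x := by
  have a1 := casD_mono n (fun k => varM c k + c k) (fun k => by
    simp only [varM, Finset.sum_range_succ]
    linarith [neg_abs_le (c (k + 1) - c k)]) x y h0 h1 h2
  have a2 := casD_mono n (fun k => varM c k + - c k) (fun k => by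
    simp only [varM, Finset.sum_range_succ]
    linarith [le_abs_self (c (k + 1) - c k)]) x y h0 h1 h2
  rw [casD_add, casD_add] at a1
  rw [casD_add n _ (fun k => - c k), casD_add n _ (fun k => - c k), casD_neg, casD_neg] at a2
  rw [abs_le]
  constructor <;> linarith

lemma eVar_casD_le (n : ℕ) (c : ℕ → ℝ) :
    eVariationOn (casD n c) (Set.Icc 0 1) ≤ ENNReal.ofReal (varM c n) := by
  have hm : MonotoneOn (casD n (varM c)) (Set.Icc 0 1) := by
    intro x hx y hy hxy
    have := abs_casD_sub n c x y hx.1 hxy hy.2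
    linarith [abs_nonneg (casD n c y - casD n c x)]
  calc eVariationOn (casD n c) (Set.Icc 0 1)
      ≤ eVariationOn (casD n (varM c)) (Set.Icc 0 1) := by
        refine iSup_mono fun p => Finset.sum_le_sum fun i _ => ?_
        rw [edist_dist, edist_dist]
        refine ENNReal.ofReal_le_ofReal ?_
        rw [Real.dist_eq, Real.dist_eq]
        exact (abs_casD_sub n c _ _ (p.2.2.2 i).1 (p.2.2.1 (Nat.le_succ i))
          (p.2.2.2 (i + 1)).2).trans (le_abs_self _)
    _ ≤ ENNReal.ofReal (varM c n) := by
        have := hm.eVariationOn_le (a := 0) (b := 1) (by simp) (by simp)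
        rw [Set.inter_self, casD_zero, casD_one] at this
        simpa [varM] using this

lemma aFun_facts (μ : ℝ) (hμ : 0 < μ) (n : ℕ) (hn : 0 < n) :
    MonotoneOn (aFun μ n) (Set.Icc 0 1) ∧ Set.MapsTo (aFun μ n) (Set.Icc 0 1) (Set.Icc 0 1)
      ∧ aFun μ n 0 = 0 := by
  have hn' : (0 : ℝ) < n := by exact_mod_cast hn
  have hp : (0 : ℝ) < n * (1 + μ) := by positivity
  have hl : 0 < Real.log (1 + 1 / (n * (1 + μ))) := Real.log_pos (by
    have : (0:ℝ) < 1 / (n * (1 + μ)) := by positivity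
    linarith)
  have hm : MonotoneOn (aFun μ n) (Set.Icc 0 1) := by
    intro x hx y hy hxy
    have hx0 := hx.1
    unfold aFun
    have : (0:ℝ) < 1 + x / (n * (1 + μ)) := by positivity
    gcongr
  have h0 : aFun μ n 0 = 0 := by simp [aFun]
  have h1 : aFun μ n 1 = 1 := div_self hl.ne'
  refine ⟨hm, fun x hx => ⟨?_, ?_⟩, h0⟩
  · rw [← h0]; exact hm (by simp) hx hx.1
  · rw [← h1]; exact hm hx (by simp) hx.2

theorem stmt17 (μ : ℝ) (hμ : 0 < μ) (f : ℝ → ℝ)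
    (hf : BoundedVariationOn f (Set.Icc (0:ℝ) 1)) (n : ℕ) (hn : 0 < n) :
    eVariationOn (fun x => Lop μ n f x / logμ μ x) (Set.Icc (0:ℝ) 1)
        + ENNReal.ofReal |Lop μ n f 0| ≤
      eVariationOn (fun x => f x / logμ μ x) (Set.Icc (0:ℝ) 1)
        + ENNReal.ofReal |f 0| := by
  have hlog : ∀ x, 0 ≤ x → 0 < logμ μ x := fun x hx => Real.log_pos (by linarith)
  obtain ⟨hm, hmaps, ha0⟩ := aFun_facts μ hμ n hn
  have hn' : (0 : ℝ) < n := by exact_mod_cast hn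
  set c : ℕ → ℝ := fun k => f ((k : ℝ) / n) / logμ μ ((k : ℝ) / n) with hc
  have hL : ∀ x, Lop μ n f x = logμ μ x * casD n c (aFun μ n x) := by
    intro x
    rw [← sum_eq_casD]
    simp only [Lop, hc, div_eq_mul_one_div (f _)]
  have hL0 : Lop μ n f 0 = f 0 := by
    rw [hL, ha0, casD_zero]
    simp only [hc, Nat.cast_zero, zero_div]
    exact mul_div_cancel₀ _ (hlog 0 le_rfl).ne'
  rw [hL0]
  refine add_le_add_left ?_ _
  calc eVariationOn (fun x => Lop μ n f x / logμ μ x) (Set.Icc (0:ℝ) 1)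
      = eVariationOn (casD n c ∘ aFun μ n) (Set.Icc (0:ℝ) 1) := by
        refine eVariationOn.congr fun x hx => ?_
        simp only [hL, Function.comp]
        exact mul_div_cancel_left₀ _ (hlog x hx.1).ne'
    _ ≤ eVariationOn (casD n c) (Set.Icc 0 1) := eVariationOn.comp_le_of_monotoneOn _ _ hm hmaps
    _ ≤ ENNReal.ofReal (varM c n) := eVar_casD_le n c
    _ ≤ _ := by
        have := eVariationOn.sum_le_of_monotoneOn_Iic (f := fun x => f x / logμ μ x)
          (s := Set.Icc (0:ℝ) 1) (n := n) (u := fun k : ℕ => (k : ℝ) / n)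
          (fun i _ j _ hij => by
            have : (i : ℝ) ≤ j := by exact_mod_cast hij
            show (i : ℝ) / n ≤ j / n
            gcongr)
          (fun i hi => ⟨by positivity, by
            rw [div_le_one hn']; exact_mod_cast hi⟩)
        refine le_trans (le_of_eq ?_) this
        rw [varM, ENNReal.ofReal_sum_of_nonneg (fun _ _ => abs_nonneg _)]
        refine Finset.sum_congr rfl fun i _ => ?_
        rw [edist_dist, Real.dist_eq]
end
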